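/- (Andô's inequality) Let T₁ and T₂ be commuting bounded linear operators on a complex Hilbert space with ‖T₁‖ ≤ 1 and ‖T₂‖ ≤ 1, and let p(z,w) be a polynomial in two variables with complex coefficients. Then ‖p(T₁,T₂)‖ ≤ sup_{|z| ≤ 1, |w| ≤ 1} |p(z,w)|. -/

import Mathlib

/-!
Andô's theorem: two commuting contractions `T₁, T₂` on `H` have commuting isometric lifts `V₁, V₂`
on some `K ⊇ H`, so that `V₁ ^ i V₂ ^ j` compresses to `T₁ ^ i T₂ ^ j` and it suffices to bound
`p(V₁, V₂)`.  The naive one-step lifts `W_i (h, x) = (T_i h, D_i h, x)`, where `D_i` is a defect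
operator of `T_i`, do not commute, but the two-step vectors `(D₁ T₂ h, D₂ h)` and `(D₂ T₁ h, D₁ h)`
have the same norm.  If moreover `D₁` and `D₂` have orthogonal ranges, one unitary involution
exchanges these vectors; acting on each pair of consecutive coordinates, it gives an involution `R`
with `R W₁ W₂ = W₂ W₁ R`, so that `R W₁` and `W₂ R` commute.

For commuting isometries, the orbit of a vector along a large box in `ℕ²` is almost a function on
`(ℤ/N)²`, on which `p(V₁, V₂)` acts as a polynomial in the two translations.
The Fourier transform diagonalises this action, with eigenvalues the values of `p` at points of the
torus; the boundary error disappears as the box grows.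
-/

open Metric MvPolynomial

/-- For commuting operators `T₁, T₂`, the operator `p(T₁, T₂)` obtained by substituting
them into a two-variable polynomial `p`. -/
noncomputable def polyEvalPair {H : Type*} [NormedAddCommGroup H] [InnerProductSpace ℂ H]
    (p : MvPolynomial (Fin 2) ℂ) (T₁ T₂ : H →L[ℂ] H) : H →L[ℂ] H :=
  ∑ m ∈ p.support, MvPolynomial.coeff m p • (T₁ ^ m 0 * T₂ ^ m 1)

section FiniteFourier

variable {G E ι : Type*} [AddCommGroup G] [Fintype G]

/-- The unnormalised Fourier transform of a vector-valued function on a finite abelian group. -/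
noncomputable def finiteFourier [AddCommMonoid E] [Module ℂ E] (f : G → E) (χ : AddChar G ℂ) : E :=
  ∑ g, χ (-g) • f g

lemma finiteFourier_sum_smul_translate [AddCommMonoid E] [Module ℂ E] (f : G → E) (s : Finset ι)
    (c : ι → ℂ) (k : ι → G) (χ : AddChar G ℂ) :
    finiteFourier (fun g => ∑ i ∈ s, c i • f (g + k i)) χ
      = (∑ i ∈ s, c i * χ (k i)) • finiteFourier f χ := by
  rw [finiteFourier, Finset.sum_smul]
  simp only [Finset.smul_sum]
  rw [Finset.sum_comm]
  refine Finset.sum_congr rfl fun i _ => ?_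
  rw [finiteFourier, Finset.smul_sum,
    ← Equiv.sum_comp (Equiv.addRight (k i)) fun g => (c i * χ (k i)) • χ (-g) • f g]
  refine Finset.sum_congr rfl fun g _ => ?_
  have hχ : χ (-g) = χ (k i) * χ (-(g + k i)) := by
    rw [← AddChar.map_add_eq_mul]
    congr 1
    abel
  rw [Equiv.coe_addRight, hχ, smul_smul, smul_smul]
  ring_nf

variable [NormedAddCommGroup E] [InnerProductSpace ℂ E]

lemma inner_finiteFourier_self (f : G → E) (χ : AddChar G ℂ) :
    inner ℂ (finiteFourier f χ) (finiteFourier f χ)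
      = ∑ g, ∑ g', χ (g - g') * inner ℂ (f g) (f g') := by
  rw [finiteFourier, sum_inner]
  simp only [inner_sum]
  refine Finset.sum_congr rfl fun g _ => Finset.sum_congr rfl fun g' _ => ?_
  rw [inner_smul_left, inner_smul_right, ← mul_assoc, ← AddChar.map_neg_eq_conj, neg_neg,
    ← AddChar.map_add_eq_mul, sub_eq_add_neg]

theorem sum_norm_sq_finiteFourier (f : G → E) :
    ∑ χ : AddChar G ℂ, ‖finiteFourier f χ‖ ^ 2 = Fintype.card G * ∑ g, ‖f g‖ ^ 2 := by
  classical
  have hnorm (v : E) : ((‖v‖ ^ 2 : ℝ) : ℂ) = inner ℂ v v := by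
    rw [inner_self_eq_norm_sq_to_K, Complex.ofReal_pow]
    rfl
  apply Complex.ofReal_injective
  rw [Complex.ofReal_mul, Complex.ofReal_sum, Complex.ofReal_sum, Complex.ofReal_natCast]
  simp only [hnorm, inner_finiteFourier_self]
  calc ∑ χ : AddChar G ℂ, ∑ g, ∑ g', χ (g - g') * inner ℂ (f g) (f g')
      = ∑ g, ∑ g', (∑ χ : AddChar G ℂ, χ (g - g')) * inner ℂ (f g) (f g') := by
        rw [Finset.sum_comm]
        refine Finset.sum_congr rfl fun g _ => ?_
        rw [Finset.sum_comm]
        simp only [Finset.sum_mul]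
    _ = Fintype.card G * ∑ g, inner ℂ (f g) (f g) := by
        simp only [AddChar.sum_apply_eq_ite, sub_eq_zero, ite_mul, zero_mul, Finset.sum_ite_eq,
          Finset.mem_univ, if_true, Finset.mul_sum]

theorem sum_norm_sq_sum_smul_translate_le (f : G → E) (s : Finset ι) (c : ι → ℂ) (k : ι → G)
    {C : ℝ} (hC : ∀ χ : AddChar G ℂ, ‖∑ i ∈ s, c i * χ (k i)‖ ≤ C) :
    ∑ g, ‖∑ i ∈ s, c i • f (g + k i)‖ ^ 2 ≤ C ^ 2 * ∑ g, ‖f g‖ ^ 2 := by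
  have hcard : (0 : ℝ) < Fintype.card G := by exact_mod_cast Fintype.card_pos
  refine le_of_mul_le_mul_left ?_ hcard
  rw [mul_left_comm, ← sum_norm_sq_finiteFourier, ← sum_norm_sq_finiteFourier, Finset.mul_sum]
  refine Finset.sum_le_sum fun χ _ => ?_
  rw [finiteFourier_sum_smul_translate, norm_smul, mul_pow]
  gcongr
  exact hC χ

end FiniteFourier

section IsometricRepresentation

variable {σ E : Type*}

lemma addChar_natCast_eq_prod_pow [Fintype σ] [DecidableEq σ] {N : ℕ} {R : Type*}
    [CommMonoid R] (χ : AddChar (σ → ZMod N) R) (m : σ → ℕ) :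
    χ (fun i => (m i : ZMod N)) = ∏ i, χ (Pi.single i 1) ^ m i := by
  have hm : (fun i => (m i : ZMod N)) = ∑ i, m i • Pi.single i (1 : ZMod N) := by
    ext j
    simp [Finset.sum_apply, Pi.single_apply]
  rw [hm]
  simp only [← AddChar.map_nsmul_eq_pow]
  exact map_prod χ.toMonoidHom (fun i => .ofAdd (m i • Pi.single i (1 : ZMod N))) Finset.univ

lemma sum_box_le_sum_zmod [Fintype σ] [DecidableEq σ] {n N : ℕ} [NeZero N] (hnN : n ≤ N)
    {F : (σ → ZMod N) → ℝ} (hF : 0 ≤ F) :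
    ∑ q : σ → Fin n, F (fun i => ((q i : ℕ) : ZMod N)) ≤ ∑ g, F g := by
  classical
  have hinj : Function.Injective fun (q : σ → Fin n) (i : σ) => ((q i : ℕ) : ZMod N) :=
    Function.Injective.comp_left (g := fun j : Fin n => ((j : ℕ) : ZMod N)) fun j j' h => by
      rw [ZMod.natCast_eq_natCast_iff', Nat.mod_eq_of_lt (j.isLt.trans_le hnN),
        Nat.mod_eq_of_lt (j'.isLt.trans_le hnN)] at h
      exact Fin.ext h
  rw [← Finset.sum_image (f := F) hinj.injOn]
  exact Finset.sum_le_univ_sum_of_nonneg hF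

variable [NormedAddCommGroup E] [InnerProductSpace ℂ E]

/-- The orbit of `x` along the box `[0, N)^σ`, as a function on `(ℤ/N)^σ`. -/
noncomputable def zmodOrbit [Finite σ] {N : ℕ} (V : Multiplicative (σ →₀ ℕ) →* (E →ₗᵢ[ℂ] E))
    (x : E) (g : σ → ZMod N) : E :=
  V (.ofAdd (Finsupp.equivFunOnFinite.symm fun i => (g i).val)) x

lemma zmodOrbit_natCast [Finite σ] {N : ℕ} (V : Multiplicative (σ →₀ ℕ) →* (E →ₗᵢ[ℂ] E)) (x : E)
    {m : σ →₀ ℕ} (hm : ∀ i, m i < N) :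
    zmodOrbit V x (fun i => (m i : ZMod N)) = V (.ofAdd m) x := by
  have hval : Finsupp.equivFunOnFinite.symm (fun i => (m i : ZMod N).val) = m := by
    ext i
    exact ZMod.val_natCast_of_lt (hm i)
  rw [zmodOrbit, hval]

lemma sum_coeff_smul_zmodOrbit_add [Finite σ] {N : ℕ}
    (V : Multiplicative (σ →₀ ℕ) →* (E →ₗᵢ[ℂ] E)) (p : MvPolynomial σ ℂ) (x : E) {q : σ →₀ ℕ}
    (hq : ∀ i, q i + p.totalDegree < N) :
    ∑ m ∈ p.support,
        p.coeff m • zmodOrbit V x ((fun i => (q i : ZMod N)) + fun i => (m i : ZMod N))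
      = V (.ofAdd q) (∑ m ∈ p.support, p.coeff m • V (.ofAdd m) x) := by
  rw [map_sum]
  refine Finset.sum_congr rfl fun m hm => ?_
  have hlt (i : σ) : (q + m) i < N := by
    have hdeg : m i ≤ p.totalDegree :=
      (monomial_le_degreeOf i hm).trans (degreeOf_le_totalDegree p i)
    exact (Nat.add_le_add_left hdeg _).trans_lt (hq i)
  have hadd : (fun i => (q i : ZMod N)) + (fun i => (m i : ZMod N))
      = fun i => ((q + m) i : ZMod N) := by
    ext i
    exact (Nat.cast_add _ _).symm
  rw [hadd, zmodOrbit_natCast V x hlt, ofAdd_add, map_mul, LinearIsometry.map_smul]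
  rfl

lemma box_card_mul_norm_sq_le [Fintype σ] (V : Multiplicative (σ →₀ ℕ) →* (E →ₗᵢ[ℂ] E))
    (p : MvPolynomial σ ℂ) {C : ℝ} (hC : ∀ z : σ → ℂ, (∀ i, ‖z i‖ = 1) → ‖eval z p‖ ≤ C)
    (x : E) {n : ℕ} (hn : 0 < n) :
    (n : ℝ) ^ Fintype.card σ * ‖∑ m ∈ p.support, p.coeff m • V (.ofAdd m) x‖ ^ 2
      ≤ C ^ 2 * (((n + p.totalDegree : ℕ) : ℝ) ^ Fintype.card σ * ‖x‖ ^ 2) := by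
  classical
  set y := ∑ m ∈ p.support, p.coeff m • V (.ofAdd m) x
  set N := n + p.totalDegree
  have : NeZero N := ⟨(Nat.add_pos_left hn _).ne'⟩
  let residue (m : σ →₀ ℕ) : σ → ZMod N := fun i => (m i : ZMod N)
  let convolution (g : σ → ZMod N) : E :=
    ∑ m ∈ p.support, p.coeff m • zmodOrbit V x (g + residue m)
  have hchar (χ : AddChar (σ → ZMod N) ℂ) :
      ‖∑ m ∈ p.support, p.coeff m * χ (residue m)‖ ≤ C := by
    simp only [residue, addChar_natCast_eq_prod_pow, ← eval_eq']
    exact hC _ fun i => χ.norm_apply _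
  have hbox (q : σ → Fin n) : ‖convolution fun i => ((q i : ℕ) : ZMod N)‖ = ‖y‖ := by
    have hq := sum_coeff_smul_zmodOrbit_add V p x (N := N)
      (q := Finsupp.equivFunOnFinite.symm fun i => (q i : ℕ))
      fun i => Nat.add_lt_add_right (q i).isLt _
    exact (congrArg norm hq).trans (LinearIsometry.norm_map _ _)
  calc (n : ℝ) ^ Fintype.card σ * ‖y‖ ^ 2
      = ∑ q : σ → Fin n, ‖convolution fun i => ((q i : ℕ) : ZMod N)‖ ^ 2 := by
        simp [hbox]
    _ ≤ ∑ g, ‖convolution g‖ ^ 2 :=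
        sum_box_le_sum_zmod (Nat.le_add_right n _) (F := fun g => ‖convolution g‖ ^ 2)
          fun _ => sq_nonneg _
    _ ≤ C ^ 2 * ∑ g : σ → ZMod N, ‖zmodOrbit V x g‖ ^ 2 :=
        sum_norm_sq_sum_smul_translate_le _ _ _ _ hchar
    _ = C ^ 2 * ((N : ℝ) ^ Fintype.card σ * ‖x‖ ^ 2) := by
        simp [zmodOrbit]

theorem norm_sum_coeff_smul_le_of_isometric [Finite σ]
    (V : Multiplicative (σ →₀ ℕ) →* (E →ₗᵢ[ℂ] E)) (p : MvPolynomial σ ℂ) {C : ℝ}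
    (hC : ∀ z : σ → ℂ, (∀ i, ‖z i‖ = 1) → ‖eval z p‖ ≤ C) (x : E) :
    ‖∑ m ∈ p.support, p.coeff m • V (.ofAdd m) x‖ ≤ C * ‖x‖ := by
  have := Fintype.ofFinite σ
  set y := ∑ m ∈ p.support, p.coeff m • V (.ofAdd m) x
  have hC₀ : 0 ≤ C := (norm_nonneg _).trans (hC 1 fun _ => norm_one)
  refine le_of_sq_le_sq ?_ (by positivity)
  have hlim : Filter.Tendsto
      (fun n : ℕ => ((n : ℝ) / (n + p.totalDegree : ℝ)) ^ Fintype.card σ * ‖y‖ ^ 2)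
      Filter.atTop (nhds (‖y‖ ^ 2)) := by
    simpa only [one_pow, one_mul] using
      ((tendsto_natCast_div_add_atTop (p.totalDegree : ℝ)).pow (Fintype.card σ)).mul_const (‖y‖ ^ 2)
  refine le_of_tendsto hlim ?_
  filter_upwards [Filter.eventually_gt_atTop 0] with n hn
  have hbox := box_card_mul_norm_sq_le V p hC x hn
  push_cast at hbox
  rw [div_pow, div_mul_eq_mul_div, div_le_iff₀ (by positivity)]
  linarith

end IsometricRepresentation

/-- The action of the monoid of exponent pairs through `m ↦ a ^ m 0 * b ^ m 1`, for commuting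
`a` and `b`. -/
def commutingPairHom {M : Type*} [Monoid M] {a b : M} (h : Commute a b) :
    Multiplicative (Fin 2 →₀ ℕ) →* M where
  toFun m := a ^ m.toAdd 0 * b ^ m.toAdd 1
  map_one' := by simp
  map_mul' m m' := by
    simp only [toAdd_mul, Finsupp.add_apply, pow_add]
    exact (h.pow_pow _ _).mul_mul_mul_comm _ _

section Swap

variable {𝕜 H E : Type*} [RCLike 𝕜] [AddCommGroup H] [Module 𝕜 H] [NormedAddCommGroup E]
  [InnerProductSpace 𝕜 E]

lemma inner_map_eq_of_norm_map_eq {α β : H →ₗ[𝕜] E} (hnorm : ∀ h, ‖α h‖ = ‖β h‖) (h k : H) :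
    inner 𝕜 (α h) (α k) = inner 𝕜 (β h) (β k) := by
  rw [inner_eq_sum_norm_sq_div_four, inner_eq_sum_norm_sq_div_four]
  simp only [← map_add, ← map_sub, ← map_smul, hnorm]

-- The involution is the reflection fixing every `α h + β h`; orthogonality of the ranges makes
-- each `α h - β h` orthogonal to all of these vectors.
theorem exists_isometric_involution_apply_eq [CompleteSpace E] {α β : H →ₗ[𝕜] E}
    (horth : ∀ h k, inner 𝕜 (α h) (β k) = 0) (hnorm : ∀ h, ‖α h‖ = ‖β h‖) :
    ∃ R : E →ₗᵢ[𝕜] E, R * R = 1 ∧ ∀ h, R (α h) = β h := by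
  let M : Submodule 𝕜 E := (LinearMap.range (α + β)).topologicalClosure
  have hadd (h : H) : M.reflection (α h + β h) = α h + β h :=
    Submodule.reflection_mem_subspace_eq_self (Submodule.le_topologicalClosure _ ⟨h, rfl⟩)
  have hsub (h : H) : M.reflection (α h - β h) = -(α h - β h) := by
    apply Submodule.reflection_mem_subspace_orthogonalComplement_eq_neg
    rw [Submodule.orthogonal_closure, Submodule.mem_orthogonal']
    rintro _ ⟨k, rfl⟩
    rw [LinearMap.add_apply, inner_sub_left, inner_add_right, inner_add_right, horth,
      inner_eq_zero_symm.1 (horth k h), inner_map_eq_of_norm_map_eq hnorm]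
    ring
  refine ⟨M.reflection.toLinearIsometry, LinearIsometry.ext M.reflection_reflection, fun h => ?_⟩
  have htwo : (2 : 𝕜) • M.reflection (α h) = (2 : 𝕜) • β h := by
    calc (2 : 𝕜) • M.reflection (α h)
        = M.reflection (α h + β h) + M.reflection (α h - β h) := by
          rw [← map_add, add_add_sub_cancel, two_smul, map_add]
      _ = (2 : 𝕜) • β h := by
          rw [hadd, hsub, two_smul]
          abel
  exact smul_right_injective E two_ne_zero htwo

end Swap

section SquareSummable

variable {𝕜 F ι : Type*} [RCLike 𝕜] [SeminormedAddCommGroup F] [Module 𝕜 F] {E : ι → Type*}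
  [∀ i, NormedAddCommGroup (E i)] [∀ i, NormedSpace 𝕜 (E i)]

lemma hasSum_norm_sq_l2 (x : lp E 2) : HasSum (fun i => ‖x i‖ ^ 2) (‖x‖ ^ 2) := by
  simpa using lp.hasSum_norm (p := 2) (by simp) x

/-- The isometry into `ℓ²` given by a linear map into families of vectors whose squared norms sum
to the squared norm of the argument. -/
noncomputable def isometryToL2 (L : F →ₗ[𝕜] ∀ i, E i)
    (hL : ∀ x, HasSum (fun i => ‖L x i‖ ^ 2) (‖x‖ ^ 2)) : F →ₗᵢ[𝕜] lp E 2 where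
  toFun x := ⟨L x, memℓp_gen (by simpa using (hL x).summable)⟩
  map_add' x y := Subtype.ext (map_add L x y)
  map_smul' c x := Subtype.ext (map_smul L c x)
  norm_map' x := by
    rw [← sq_eq_sq₀ (norm_nonneg _) (norm_nonneg _)]
    exact (hasSum_norm_sq_l2 _).unique (hL x)

/-- The isometry of `ℓ²` acting on each coordinate by an isometry `R`. -/
noncomputable def l2Map (R : ∀ i, E i →ₗᵢ[𝕜] E i) : lp E 2 →ₗᵢ[𝕜] lp E 2 :=
  isometryToL2
    { toFun := fun x i => R i (x i)
      map_add' := fun x y => funext fun i => map_add (R i) (x i) (y i)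
      map_smul' := fun c x => funext fun i => map_smul (R i) c (x i) }
    fun x => by simpa using hasSum_norm_sq_l2 x

end SquareSummable

section HalfShift

variable {𝕜 X : Type*} [RCLike 𝕜] [NormedAddCommGroup X] [InnerProductSpace 𝕜 X]

/-- The sequence `(v, x₀.fst), (x₀.snd, x₁.fst), (x₁.snd, x₂.fst), …`: a sequence in `X ⊕ X` is
read as a sequence in `X` and the vector `v` is put in front of it. -/
def halfShiftSeq {X : Type*} (v : X) (x : ℕ → WithLp 2 (X × X)) : ℕ → WithLp 2 (X × X)
  | 0 => WithLp.toLp 2 (v, (x 0).fst)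
  | n + 1 => WithLp.toLp 2 ((x n).snd, (x (n + 1)).fst)

lemma hasSum_norm_sq_halfShiftSeq (v : X) (x : lp (fun _ : ℕ => WithLp 2 (X × X)) 2) :
    HasSum (fun n => ‖halfShiftSeq v x n‖ ^ 2) (‖v‖ ^ 2 + ‖x‖ ^ 2) := by
  have hx := hasSum_norm_sq_l2 x
  simp only [WithLp.prod_norm_sq_eq_of_L2] at hx ⊢
  have hfst : Summable fun n => ‖(x n).fst‖ ^ 2 :=
    hx.summable.of_nonneg_of_le (fun _ => sq_nonneg _) fun _ => le_add_of_nonneg_right (sq_nonneg _)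
  have hsnd : Summable fun n => ‖(x n).snd‖ ^ 2 :=
    hx.summable.of_nonneg_of_le (fun _ => sq_nonneg _) fun _ => le_add_of_nonneg_left (sq_nonneg _)
  have hleft : HasSum (fun n => ‖(halfShiftSeq v x n).fst‖ ^ 2)
      (‖v‖ ^ 2 + ∑' n, ‖(x n).snd‖ ^ 2) := by
    rw [add_comm, ← hasSum_nat_add_iff' 1]
    simpa [halfShiftSeq] using hsnd.hasSum
  have hright (n : ℕ) : (halfShiftSeq v x n).snd = (x n).fst := by
    cases n <;> rfl
  rw [hx.unique (hfst.hasSum.add hsnd.hasSum), add_comm (∑' n, _), ← add_assoc]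
  simp only [hright]
  exact hleft.add hfst.hasSum

/-- The isometry `X ⊕ ℓ²(X ⊕ X) → ℓ²(X ⊕ X)` prepending one vector of `X`. -/
noncomputable def halfShift :
    WithLp 2 (X × lp (fun _ : ℕ => WithLp 2 (X × X)) 2) →ₗᵢ[𝕜]
      lp (fun _ : ℕ => WithLp 2 (X × X)) 2 :=
  isometryToL2
    { toFun := fun y => halfShiftSeq y.fst y.snd
      map_add' := fun y z => by
        ext n : 1
        cases n <;> rfl
      map_smul' := fun c y => by
        ext n : 1
        cases n <;> rfl }
    fun y => by
      rw [WithLp.prod_norm_sq_eq_of_L2]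
      exact hasSum_norm_sq_halfShiftSeq y.fst y.snd

end HalfShift

section Dilation

/-- The Hilbert space `H ⊕ ℓ²(ℕ, X ⊕ X)` carrying the isometric lifts of operators on `H` whose
defect operators take values in `X`. -/
abbrev AndoSpace (H X : Type*) [NormedAddCommGroup X] : Type _ :=
  WithLp 2 (H × lp (fun _ : ℕ => WithLp 2 (X × X)) 2)

variable {𝕜 H X : Type*} [RCLike 𝕜] [NormedAddCommGroup H] [InnerProductSpace 𝕜 H]
  [NormedAddCommGroup X] [InnerProductSpace 𝕜 X]

/-- The one-step isometric lift `(h, x) ↦ (T h, D h, x)` of a contraction `T`, for a defect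
operator `D` of `T`. -/
noncomputable def isometricLift (T : H →ₗ[𝕜] H) (D : H →ₗ[𝕜] X)
    (hD : ∀ h, ‖T h‖ ^ 2 + ‖D h‖ ^ 2 = ‖h‖ ^ 2) : AndoSpace H X →ₗᵢ[𝕜] AndoSpace H X where
  toFun y := WithLp.toLp 2 (T y.fst, halfShift (𝕜 := 𝕜) (WithLp.toLp 2 (D y.fst, y.snd)))
  map_add' y z := by
    have hsum : WithLp.toLp 2 (D (y + z).fst, (y + z).snd)
        = WithLp.toLp 2 (D y.fst, y.snd) + WithLp.toLp 2 (D z.fst, z.snd) := by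
      simp [← WithLp.toLp_add]
    rw [hsum, map_add, WithLp.add_fst, map_add]
    rfl
  map_smul' c y := by
    have hsmul : WithLp.toLp 2 (D (c • y).fst, (c • y).snd)
        = c • WithLp.toLp 2 (D y.fst, y.snd) := by
      simp [← WithLp.toLp_smul]
    rw [hsmul, map_smul, WithLp.smul_fst, map_smul]
    rfl
  norm_map' y := by
    rw [← sq_eq_sq₀ (norm_nonneg _) (norm_nonneg _)]
    simp [WithLp.prod_norm_sq_eq_of_L2, ← add_assoc, hD]

/-- The isometry of the Andô space acting by `R` on each block `X ⊕ X`. -/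
noncomputable def blockMap (H : Type*) [NormedAddCommGroup H] [InnerProductSpace 𝕜 H]
    (R : WithLp 2 (X × X) →ₗᵢ[𝕜] WithLp 2 (X × X)) : AndoSpace H X →ₗᵢ[𝕜] AndoSpace H X :=
  LinearIsometry.id.withLpProdMap 2 (l2Map fun _ => R)

lemma blockMap_mul_self {R : WithLp 2 (X × X) →ₗᵢ[𝕜] WithLp 2 (X × X)} (hR : R * R = 1) :
    blockMap H R * blockMap H R = 1 := by
  refine LinearIsometry.ext fun y => ?_
  refine congrArg (WithLp.toLp 2) (Prod.ext rfl (lp.ext (funext fun n => ?_)))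
  exact congrArg (fun S : WithLp 2 (X × X) →ₗᵢ[𝕜] WithLp 2 (X × X) => S (y.snd n)) hR

lemma blockMap_mul_isometricLift_mul {T₁ T₂ : H →ₗ[𝕜] H} {D₁ D₂ : H →ₗ[𝕜] X}
    {R : WithLp 2 (X × X) →ₗᵢ[𝕜] WithLp 2 (X × X)} (hcomm : Commute T₁ T₂)
    (hD₁ : ∀ h, ‖T₁ h‖ ^ 2 + ‖D₁ h‖ ^ 2 = ‖h‖ ^ 2) (hD₂ : ∀ h, ‖T₂ h‖ ^ 2 + ‖D₂ h‖ ^ 2 = ‖h‖ ^ 2)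
    (hR : ∀ h, R (WithLp.toLp 2 (D₁ (T₂ h), D₂ h)) = WithLp.toLp 2 (D₂ (T₁ h), D₁ h)) :
    blockMap H R * (isometricLift T₁ D₁ hD₁ * isometricLift T₂ D₂ hD₂)
      = isometricLift T₂ D₂ hD₂ * isometricLift T₁ D₁ hD₁ * blockMap H R := by
  refine LinearIsometry.ext fun y => ?_
  refine congrArg (WithLp.toLp 2) (Prod.ext (LinearMap.congr_fun hcomm.eq y.fst) (lp.ext ?_))
  funext n
  -- Two half-shifts move the sequence by one whole block, so only the first block involves `hR`.
  cases n with
  | zero => exact hR y.fst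
  | succ n => cases n <;> rfl

theorem commute_blockMap_mul_isometricLift {T₁ T₂ : H →ₗ[𝕜] H} {D₁ D₂ : H →ₗ[𝕜] X}
    {R : WithLp 2 (X × X) →ₗᵢ[𝕜] WithLp 2 (X × X)} (hcomm : Commute T₁ T₂)
    (hD₁ : ∀ h, ‖T₁ h‖ ^ 2 + ‖D₁ h‖ ^ 2 = ‖h‖ ^ 2) (hD₂ : ∀ h, ‖T₂ h‖ ^ 2 + ‖D₂ h‖ ^ 2 = ‖h‖ ^ 2)
    (hRR : R * R = 1)
    (hR : ∀ h, R (WithLp.toLp 2 (D₁ (T₂ h), D₂ h)) = WithLp.toLp 2 (D₂ (T₁ h), D₁ h)) :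
    Commute (blockMap H R * isometricLift T₁ D₁ hD₁) (isometricLift T₂ D₂ hD₂ * blockMap H R) := by
  set W₁ := isometricLift T₁ D₁ hD₁
  set W₂ := isometricLift T₂ D₂ hD₂
  set B := blockMap H R
  have hBB : B * B = 1 := blockMap_mul_self hRR
  calc B * W₁ * (W₂ * B)
      = B * (W₁ * W₂) * B := by simp only [mul_assoc]
    _ = W₂ * W₁ * (B * B) := by
        rw [blockMap_mul_isometricLift_mul hcomm hD₁ hD₂ hR, mul_assoc]
    _ = W₂ * (B * B) * W₁ := by rw [hBB, mul_one, mul_one]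
    _ = W₂ * B * (B * W₁) := by simp only [mul_assoc]

/-- The inclusion `h ↦ (h, 0)` of `H` in the Andô space. -/
noncomputable def andoInclusion (𝕜 H X : Type*) [RCLike 𝕜] [NormedAddCommGroup H]
    [InnerProductSpace 𝕜 H] [NormedAddCommGroup X] [InnerProductSpace 𝕜 X] :
    H →ₗᵢ[𝕜] AndoSpace H X where
  toFun h := WithLp.toLp 2 (h, 0)
  map_add' h k := by simp [← WithLp.toLp_add]
  map_smul' c h := by simp [← WithLp.toLp_smul]
  norm_map' h := by simp

lemma adjoint_andoInclusion_apply [CompleteSpace H] [CompleteSpace X] (y : AndoSpace H X) :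
    ContinuousLinearMap.adjoint (andoInclusion 𝕜 H X).toContinuousLinearMap y = y.fst := by
  refine ext_inner_left 𝕜 fun h => ?_
  rw [ContinuousLinearMap.adjoint_inner_right, WithLp.prod_inner_apply]
  simp [andoInclusion]

lemma fst_isometry_pow_apply {T : H →L[𝕜] H} {V : AndoSpace H X →ₗᵢ[𝕜] AndoSpace H X}
    (hV : ∀ y, (V y).fst = T y.fst) (i : ℕ) (y : AndoSpace H X) :
    ((V ^ i) y).fst = (T ^ i) y.fst := by
  rw [LinearIsometry.coe_pow, FunLike.coe_pow_eq_iterate]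
  exact (Function.Semiconj.iterate_right (f := WithLp.fst) hV i) y

lemma exists_isometric_involution_swap_defects [CompleteSpace X] {T₁ T₂ : H →ₗ[𝕜] H}
    {D₁ D₂ : H →ₗ[𝕜] X} (hcomm : Commute T₁ T₂)
    (hD₁ : ∀ h, ‖T₁ h‖ ^ 2 + ‖D₁ h‖ ^ 2 = ‖h‖ ^ 2) (hD₂ : ∀ h, ‖T₂ h‖ ^ 2 + ‖D₂ h‖ ^ 2 = ‖h‖ ^ 2)
    (horth : ∀ h k, inner 𝕜 (D₁ h) (D₂ k) = 0) :
    ∃ R : WithLp 2 (X × X) →ₗᵢ[𝕜] WithLp 2 (X × X), R * R = 1 ∧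
      ∀ h, R (WithLp.toLp 2 (D₁ (T₂ h), D₂ h)) = WithLp.toLp 2 (D₂ (T₁ h), D₁ h) := by
  let pair : X × X →ₗ[𝕜] WithLp 2 (X × X) := (WithLp.linearEquiv 2 𝕜 (X × X)).symm
  refine exists_isometric_involution_apply_eq (α := pair ∘ₗ (D₁ ∘ₗ T₂).prod D₂)
    (β := pair ∘ₗ (D₂ ∘ₗ T₁).prod D₁) (fun h k => ?_) fun h => ?_
  · change inner 𝕜 (WithLp.toLp 2 (D₁ (T₂ h), D₂ h)) (WithLp.toLp 2 (D₂ (T₁ k), D₁ k)) = 0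
    simp [WithLp.prod_inner_apply, horth, inner_eq_zero_symm.1 (horth k h)]
  · change ‖WithLp.toLp 2 (D₁ (T₂ h), D₂ h)‖ = ‖WithLp.toLp 2 (D₂ (T₁ h), D₁ h)‖
    rw [← sq_eq_sq₀ (norm_nonneg _) (norm_nonneg _), WithLp.prod_norm_sq_eq_of_L2,
      WithLp.prod_norm_sq_eq_of_L2]
    have hT : ‖T₁ (T₂ h)‖ = ‖T₂ (T₁ h)‖ := congrArg norm (LinearMap.congr_fun hcomm.eq h)
    have hD₁T₂ := hD₁ (T₂ h)
    rw [hT] at hD₁T₂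
    simp only [WithLp.toLp_fst, WithLp.toLp_snd]
    linarith [hD₁ h, hD₂ h, hD₂ (T₁ h)]

end Dilation

section Contractions

universe u

variable {H : Type u} [NormedAddCommGroup H] [InnerProductSpace ℂ H] [CompleteSpace H]

lemma exists_defect_operator {T : H →L[ℂ] H} (hT : ‖T‖ ≤ 1) :
    ∃ D : H →L[ℂ] H, ∀ h, ‖T h‖ ^ 2 + ‖D h‖ ^ 2 = ‖h‖ ^ 2 := by
  have hpos : 0 ≤ 1 - star T * T := by
    rw [sub_nonneg, ← CStarAlgebra.norm_le_one_iff_of_nonneg _ (star_mul_self_nonneg T),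
      CStarRing.norm_star_mul_self]
    exact mul_le_one₀ hT (norm_nonneg _) hT
  obtain ⟨D, hD⟩ := CStarAlgebra.nonneg_iff_eq_star_mul_self.1 hpos
  have hsum : star T * T + star D * D = 1 := by rw [← hD, add_sub_cancel]
  refine ⟨D, fun h => ?_⟩
  calc ‖T h‖ ^ 2 + ‖D h‖ ^ 2
      = RCLike.re (inner ℂ h ((star T * T + star D * D) h)) := by
        rw [T.apply_norm_sq_eq_inner_adjoint_right, D.apply_norm_sq_eq_inner_adjoint_right,
          ← map_add, ← inner_add_right]
        rfl
    _ = ‖h‖ ^ 2 := by rw [hsum, ← inner_self_eq_norm_sq (𝕜 := ℂ)]; rfl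

lemma exists_orthogonal_defect_maps {T₁ T₂ : H →L[ℂ] H} (h₁ : ‖T₁‖ ≤ 1) (h₂ : ‖T₂‖ ≤ 1) :
    ∃ D₁ D₂ : H →ₗ[ℂ] WithLp 2 (H × H), (∀ h, ‖T₁ h‖ ^ 2 + ‖D₁ h‖ ^ 2 = ‖h‖ ^ 2) ∧
      (∀ h, ‖T₂ h‖ ^ 2 + ‖D₂ h‖ ^ 2 = ‖h‖ ^ 2) ∧ ∀ h k, inner ℂ (D₁ h) (D₂ k) = 0 := by
  obtain ⟨D₁, hD₁⟩ := exists_defect_operator h₁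
  obtain ⟨D₂, hD₂⟩ := exists_defect_operator h₂
  let pair : H × H →ₗ[ℂ] WithLp 2 (H × H) := (WithLp.linearEquiv 2 ℂ (H × H)).symm
  refine ⟨pair ∘ₗ .inl ℂ H H ∘ₗ D₁, pair ∘ₗ .inr ℂ H H ∘ₗ D₂, fun h => ?_, fun h => ?_,
    fun h k => ?_⟩
  · simpa [pair, WithLp.prod_norm_sq_eq_of_L2] using hD₁ h
  · simpa [pair, WithLp.prod_norm_sq_eq_of_L2] using hD₂ h
  · simp [pair, WithLp.prod_inner_apply]

theorem exists_commuting_isometric_dilation {T₁ T₂ : H →L[ℂ] H} (hcomm : Commute T₁ T₂)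
    (h₁ : ‖T₁‖ ≤ 1) (h₂ : ‖T₂‖ ≤ 1) :
    ∃ (K : Type u) (_ : NormedAddCommGroup K) (_ : InnerProductSpace ℂ K) (_ : CompleteSpace K)
      (ι : H →ₗᵢ[ℂ] K) (V₁ V₂ : K →ₗᵢ[ℂ] K), Commute V₁ V₂ ∧ ∀ (i j : ℕ) (h : H),
        ContinuousLinearMap.adjoint ι.toContinuousLinearMap ((V₁ ^ i * V₂ ^ j) (ι h))
          = (T₁ ^ i * T₂ ^ j) h := by
  obtain ⟨D₁, D₂, hD₁, hD₂, horth⟩ := exists_orthogonal_defect_maps h₁ h₂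
  have hcomm' : Commute (T₁ : H →ₗ[ℂ] H) (T₂ : H →ₗ[ℂ] H) :=
    hcomm.map ContinuousLinearMap.toLinearMapRingHom
  obtain ⟨R, hRR, hR⟩ := exists_isometric_involution_swap_defects hcomm' hD₁ hD₂ horth
  refine ⟨AndoSpace H (WithLp 2 (H × H)), inferInstance, inferInstance, inferInstance,
    andoInclusion ℂ H _, _, _,
    commute_blockMap_mul_isometricLift hcomm' hD₁ hD₂ hRR hR, fun i j h => ?_⟩
  rw [adjoint_andoInclusion_apply, LinearIsometry.coe_mul, Function.comp_apply,
    fst_isometry_pow_apply (T := T₁) fun _ => rfl,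
    fst_isometry_pow_apply (T := T₂) fun _ => rfl]
  rfl

end Contractions

lemma norm_eval_le_sum_norm_coeff {σ : Type*} (p : MvPolynomial σ ℂ) {z : σ → ℂ}
    (hz : ∀ i, ‖z i‖ ≤ 1) : ‖eval z p‖ ≤ ∑ m ∈ p.support, ‖p.coeff m‖ := by
  rw [eval_eq]
  refine norm_sum_le_of_le _ fun m _ => ?_
  rw [norm_mul, norm_prod]
  refine mul_le_of_le_one_right (norm_nonneg _) (Finset.prod_le_one (fun _ _ => norm_nonneg _) ?_)
  intro i _
  rw [norm_pow]
  exact pow_le_one₀ (norm_nonneg _) (hz i)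

lemma norm_eval_le_sSup_bidisc (p : MvPolynomial (Fin 2) ℂ) {z : Fin 2 → ℂ} (hz : ∀ i, ‖z i‖ ≤ 1) :
    ‖eval z p‖ ≤ sSup {x : ℝ | ∃ z w : ℂ, ‖z‖ ≤ 1 ∧ ‖w‖ ≤ 1 ∧ x = ‖eval ![z, w] p‖} := by
  refine le_csSup ⟨∑ m ∈ p.support, ‖p.coeff m‖, ?_⟩ ⟨z 0, z 1, hz 0, hz 1, ?_⟩
  · rintro _ ⟨z, w, hz, hw, rfl⟩
    exact norm_eval_le_sum_norm_coeff p (Fin.forall_fin_two.2 ⟨hz, hw⟩)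
  · exact congrArg (fun v => ‖eval v p‖) (FinVec.etaExpand_eq z).symm

/-- **Andô's inequality.** If `T₁, T₂` are commuting contractions on a complex Hilbert
space and `p(z, w)` is a polynomial in two complex variables, then
`‖p(T₁, T₂)‖ ≤ sup_{|z| ≤ 1, |w| ≤ 1} |p(z, w)|`. -/
theorem ando_inequality
    {H : Type*} [NormedAddCommGroup H] [InnerProductSpace ℂ H] [CompleteSpace H]
    (T₁ T₂ : H →L[ℂ] H) (hcomm : Commute T₁ T₂) (h₁ : ‖T₁‖ ≤ 1) (h₂ : ‖T₂‖ ≤ 1)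
    (p : MvPolynomial (Fin 2) ℂ) :
    ‖polyEvalPair p T₁ T₂‖ ≤
      sSup {x : ℝ | ∃ z w : ℂ, ‖z‖ ≤ 1 ∧ ‖w‖ ≤ 1 ∧ x = ‖MvPolynomial.eval ![z, w] p‖} := by
  set S := sSup {x : ℝ | ∃ z w : ℂ, ‖z‖ ≤ 1 ∧ ‖w‖ ≤ 1 ∧ x = ‖MvPolynomial.eval ![z, w] p‖}
  have hS {z : Fin 2 → ℂ} (hz : ∀ i, ‖z i‖ ≤ 1) : ‖eval z p‖ ≤ S := norm_eval_le_sSup_bidisc p hz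
  have hS₀ : 0 ≤ S := (norm_nonneg _).trans (hS (z := 0) (by simp))
  obtain ⟨K, _, _, _, ι, V₁, V₂, hV, hdil⟩ := exists_commuting_isometric_dilation hcomm h₁ h₂
  let compress := ContinuousLinearMap.adjoint ι.toContinuousLinearMap
  have hcompress : ‖compress‖ ≤ 1 := by
    rw [LinearIsometryEquiv.norm_map]
    exact ι.norm_toContinuousLinearMap_le
  refine ContinuousLinearMap.opNorm_le_bound _ hS₀ fun h => ?_
  let y := ∑ m ∈ p.support, p.coeff m • commutingPairHom hV (.ofAdd m) (ι h)
  calc ‖polyEvalPair p T₁ T₂ h‖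
      = ‖compress y‖ := by
        simp [polyEvalPair, y, ← hdil, compress, commutingPairHom]
    _ ≤ ‖y‖ := by simpa using compress.le_of_opNorm_le hcompress y
    _ ≤ S * ‖ι h‖ := norm_sum_coeff_smul_le_of_isometric _ p (fun z hz => hS fun i => (hz i).le) _
    _ = S * ‖h‖ := by rw [ι.norm_map]
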